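/- Let n ≥ 2, let e be an (n−2)-cell of the n-dimensional cubical grid, and let L be an L-block centered on e, regarded as a digital n-object. Then the number of free (n−1)-cells of L that are bounded by e equals 2. -/

import Mathlib

/-! The cells between `e` and a voxel `v` form a Boolean interval: such a cell is a point exactly in
a set `S` of the coordinates in which `e` is a point, where it agrees with `e`, and it agrees with
`v` elsewhere. Every cell `f` bounded by `e` has its block inside that of `e`, so removing `v` from
the block of `e` makes `f` free exactly when `f` bounds `v`; `f` still bounds another voxel,
the reflection of `v` through the centre of `f`. Counting the free `i`-cells above `e` is thus
counting the sets `S` of size `n - i`. -/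

namespace DigitalGeometry

/-- The dimension of a cell of the cubical grid (doubled coordinates):
the number of odd coordinates. -/
def cdim {n : ℕ} (c : Fin n → ℤ) : ℕ :=
  (Finset.univ.filter fun j => Odd (c j)).card

/-- The bounding relation `e < f` between cells of the grid. -/
def Bounds {n : ℕ} (e f : Fin n → ℤ) : Prop :=
  cdim e < cdim f ∧ ∀ j, e j = f j ∨ (Odd (f j) ∧ |e j - f j| = 1)

/-- A voxel is an `n`-cell: all coordinates odd. -/
def IsVoxel {n : ℕ} (v : Fin n → ℤ) : Prop := ∀ j, Odd (v j)

/-- The `i`-block centered on an `i`-cell `e`: all voxels bounded by `e`. -/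
def Block {n : ℕ} (e : Fin n → ℤ) : Set (Fin n → ℤ) :=
  {v | IsVoxel v ∧ Bounds e v}

/-- `Cells D i` : the `i`-cells of the object `D` (for `i < n` those bounding
some voxel of `D`; for `i = n` it is `D` itself). -/
def Cells {n : ℕ} (D : Set (Fin n → ℤ)) (i : ℕ) : Set (Fin n → ℤ) :=
  {e | cdim e = i ∧ (e ∈ D ∨ ∃ v ∈ D, Bounds e v)}

/-- `c_i(D)` : the number of `i`-cells of `D`. -/
noncomputable def cCount {n : ℕ} (D : Set (Fin n → ℤ)) (i : ℕ) : ℕ := (Cells D i).ncard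

/-- The free `i`-cells of `D`: those whose `i`-block is not contained in `D`. -/
def FreeCells {n : ℕ} (D : Set (Fin n → ℤ)) (i : ℕ) : Set (Fin n → ℤ) :=
  {e | e ∈ Cells D i ∧ ¬ Block e ⊆ D}

/-- `c*_i(D)` : the number of free `i`-cells of `D`. -/
noncomputable def cStar {n : ℕ} (D : Set (Fin n → ℤ)) (i : ℕ) : ℕ := (FreeCells D i).ncard

/-- The non-free `i`-cells of `D`. -/
def NonFreeCells {n : ℕ} (D : Set (Fin n → ℤ)) (i : ℕ) : Set (Fin n → ℤ) :=
  {e | e ∈ Cells D i ∧ Block e ⊆ D}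

/-- `c'_i(D)` : the number of non-free `i`-cells of `D`. -/
noncomputable def cPrime {n : ℕ} (D : Set (Fin n → ℤ)) (i : ℕ) : ℕ := (NonFreeCells D i).ncard

/-- `InterCell v1 v2 e` : the intersection of the voxels `v1`, `v2`
(as subsets of `ℝ^n`) equals the cell `e`. -/
def InterCell {n : ℕ} (v1 v2 e : Fin n → ℤ) : Prop :=
  ∀ j, (v1 j = v2 j ∧ e j = v1 j) ∨
       (e j + 1 = max (v1 j) (v2 j) ∧ e j - 1 = min (v1 j) (v2 j))

/-- `e` is an `(n-2)`-hub of `D`, i.e. `D` has an `(n-2)`-gap over `e`. -/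
def IsHub {n : ℕ} (D : Set (Fin n → ℤ)) (e : Fin n → ℤ) : Prop :=
  cdim e = n - 2 ∧ ∃ v1 v2 : Fin n → ℤ, v1 ≠ v2 ∧
    Block e ∩ D = {v1, v2} ∧ InterCell v1 v2 e

/-- `g_{n-2}(D)` : the number of `(n-2)`-gaps of `D`. -/
noncomputable def gapCount {n : ℕ} (D : Set (Fin n → ℤ)) : ℕ := {e | IsHub D e}.ncard

/-- `b_j(e, D)` : the number of free `j`-cells of `D` bounded by `e`. -/
noncomputable def bcount {n : ℕ} (e : Fin n → ℤ) (D : Set (Fin n → ℤ)) (j : ℕ) : ℕ :=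
  {f | f ∈ FreeCells D j ∧ Bounds e f}.ncard

/-- Two voxels are `i`-adjacent if they are distinct and their intersection
contains an `i`-cell. -/
def Adj {n : ℕ} (i : ℕ) (v1 v2 : Fin n → ℤ) : Prop :=
  v1 ≠ v2 ∧ ∃ e : Fin n → ℤ, cdim e = i ∧ Bounds e v1 ∧ Bounds e v2

section

variable {n i : ℕ} {e f g v : Fin n → ℤ}

/-- The coordinates in which a cell is a single point rather than a unit interval; their number
is the codimension of the cell. -/
def evenCoords (c : Fin n → ℤ) : Finset (Fin n) :=
  {j | Even (c j)}

@[simp]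
theorem mem_evenCoords {j : Fin n} : j ∈ evenCoords e ↔ Even (e j) := by
  simp [evenCoords]

theorem cdim_add_card_evenCoords (c : Fin n → ℤ) : cdim c + (evenCoords c).card = n := by
  simpa [cdim, evenCoords] using
    Finset.card_filter_add_card_filter_not (s := Finset.univ) fun j => Odd (c j)

theorem IsVoxel.cdim_eq (hv : IsVoxel v) : cdim v = n := by
  simp [cdim, Finset.filter_true_of_mem fun j _ => hv j]

theorem Bounds.eq_of_even (h : Bounds e f) {j : Fin n} (hj : Even (f j)) : e j = f j :=
  (h.2 j).resolve_right fun hodd => Int.not_even_iff_odd.2 hodd.1 hj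

theorem Bounds.eq_of_odd (h : Bounds e f) {j : Fin n} (hj : Odd (e j)) : e j = f j := by
  refine (h.2 j).resolve_right fun ⟨hodd, habs⟩ => ?_
  have heven : Even |e j - f j| := even_abs.2 (hj.sub_odd hodd)
  rw [habs] at heven
  exact Int.not_even_one heven

theorem Bounds.trans (hef : Bounds e f) (hfg : Bounds f g) : Bounds e g := by
  refine ⟨hef.1.trans hfg.1, fun j => ?_⟩
  rcases hef.2 j with heq | hadj
  · exact heq ▸ hfg.2 j
  · exact .inr (hfg.eq_of_odd hadj.1 ▸ hadj)

theorem Bounds.evenCoords_subset (h : Bounds e f) : evenCoords f ⊆ evenCoords e := by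
  intro j hj
  rw [mem_evenCoords] at hj ⊢
  rwa [h.eq_of_even hj]

theorem Bounds.block_subset (h : Bounds e f) : Block f ⊆ Block e :=
  fun _ hv => ⟨hv.1, h.trans hv.2⟩

theorem two_mul_sub_mem_block (hv : v ∈ Block f) : 2 * f - v ∈ Block f := by
  have hvox : IsVoxel (2 * f - v) := fun j => (even_two_mul (f j)).sub_odd (hv.1 j)
  have hdim : cdim f < cdim (2 * f - v) :=
    hv.2.1.trans_eq (hv.1.cdim_eq.trans hvox.cdim_eq.symm)
  refine ⟨hvox, hdim, fun j => ?_⟩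
  have hneg : f j - (2 * f - v) j = -(f j - v j) := by
    simp only [Pi.sub_apply, Pi.mul_apply, Pi.ofNat_apply]
    ring
  refine (hv.2.2 j).imp (fun heq => ?_) fun hadj => ⟨hvox j, ?_⟩
  · rw [← sub_eq_zero, hneg, heq, sub_self, neg_zero]
  · rw [hneg, abs_neg, hadj.2]

theorem exists_mem_block_ne (hv : v ∈ Block f) : ∃ w ∈ Block f, w ≠ v := by
  refine ⟨2 * f - v, two_mul_sub_mem_block hv, fun hfix => hv.2.1.ne (congrArg cdim ?_)⟩
  funext j
  have hj : 2 * f j - v j = v j := congrFun hfix j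
  omega

theorem mem_freeCells_block_diff_singleton_iff (hef : Bounds e f) :
    f ∈ FreeCells (Block e \ {v}) i ↔ cdim f = i ∧ v ∈ Block f := by
  have hfree : ¬ Block f ⊆ Block e \ {v} ↔ v ∈ Block f := by
    simp [Set.subset_sdiff, hef.block_subset]
  refine ⟨fun hf => ⟨hf.1.1, hfree.1 hf.2⟩, fun ⟨hdim, hv⟩ => ⟨⟨hdim, .inr ?_⟩, hfree.2 hv⟩⟩
  obtain ⟨w, hw, hwv⟩ := exists_mem_block_ne hv
  exact ⟨w, ⟨hef.block_subset hw, hwv⟩, hw.2⟩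

theorem IsVoxel.evenCoords_piecewise (hv : IsVoxel v) {S : Finset (Fin n)}
    (hS : S ⊆ evenCoords e) : evenCoords (S.piecewise e v) = S := by
  ext j
  by_cases hj : j ∈ S
  · simpa [hj] using hS hj
  · simpa [hj] using hv j

theorem Bounds.piecewise_evenCoords (hef : Bounds e f) (hfv : Bounds f v) :
    (evenCoords f).piecewise e v = f := by
  funext j
  by_cases hj : Even (f j)
  · rw [Finset.piecewise_eq_of_mem _ _ _ (mem_evenCoords.2 hj), hef.eq_of_even hj]
  · rw [Finset.piecewise_eq_of_notMem _ _ _ (mt mem_evenCoords.1 hj),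
      hfv.eq_of_odd (Int.not_even_iff_odd.1 hj)]

theorem Bounds.left_piecewise (hev : Bounds e v) {S : Finset (Fin n)}
    (hdim : cdim e < cdim (S.piecewise e v)) : Bounds e (S.piecewise e v) := by
  refine ⟨hdim, fun j => ?_⟩
  by_cases hj : j ∈ S
  · simp [hj]
  · simpa [hj] using hev.2 j

theorem Bounds.piecewise_right (hev : Bounds e v) {S : Finset (Fin n)}
    (hdim : cdim (S.piecewise e v) < cdim v) : Bounds (S.piecewise e v) v := by
  refine ⟨hdim, fun j => ?_⟩
  by_cases hj : j ∈ S
  · simpa [hj] using hev.2 j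
  · simp [hj]

theorem bijOn_piecewise_cells_between (hv : v ∈ Block e) (hei : cdim e < i) (hin : i < n) :
    Set.BijOn (fun S : Finset (Fin n) => S.piecewise e v)
      ((evenCoords e).powersetCard (n - i)) {f | cdim f = i ∧ Bounds e f ∧ Bounds f v} := by
  obtain ⟨hvox, hev⟩ := hv
  have hinv : Set.InvOn evenCoords (fun S : Finset (Fin n) => S.piecewise e v)
      ((evenCoords e).powersetCard (n - i)) {f | cdim f = i ∧ Bounds e f ∧ Bounds f v} :=
    ⟨fun _ hS => hvox.evenCoords_piecewise (Finset.mem_powersetCard.1 hS).1,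
      fun _ hf => hf.2.1.piecewise_evenCoords hf.2.2⟩
  refine hinv.bijOn (fun S hS => ?mapsTo_piecewise) fun f hf => ?mapsTo_evenCoords
  case mapsTo_piecewise =>
    obtain ⟨hsub, hcard⟩ := Finset.mem_powersetCard.1 hS
    have hdim : cdim (S.piecewise e v) = i := by
      have hsum := cdim_add_card_evenCoords (S.piecewise e v)
      rw [hvox.evenCoords_piecewise hsub] at hsum
      omega
    exact ⟨hdim, hev.left_piecewise (hdim ▸ hei),
      hev.piecewise_right (by rwa [hdim, hvox.cdim_eq])⟩
  case mapsTo_evenCoords =>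
    obtain ⟨rfl, hef, -⟩ := hf
    have hsum := cdim_add_card_evenCoords f
    exact Finset.mem_powersetCard.2 ⟨hef.evenCoords_subset, by omega⟩

theorem ncard_cells_between (hv : v ∈ Block e) (hei : cdim e < i) (hin : i < n) :
    {f | cdim f = i ∧ Bounds e f ∧ Bounds f v}.ncard = (n - cdim e).choose (n - i) := by
  have hbij := bijOn_piecewise_cells_between hv hei hin
  have hsum := cdim_add_card_evenCoords e
  rw [← hbij.ncard_eq, Set.ncard_coe_finset, Finset.card_powersetCard,
    show (evenCoords e).card = n - cdim e by omega]

theorem bcount_in_Lblock_general (hv : v ∈ Block e) (hei : cdim e < i) (hin : i < n) :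
    bcount e (Block e \ {v}) i = (n - cdim e).choose (n - i) := by
  rw [bcount, ← ncard_cells_between hv hei hin]
  congr 1
  ext f
  constructor
  · rintro ⟨hfree, hef⟩
    obtain ⟨hdim, hfv⟩ := (mem_freeCells_block_diff_singleton_iff hef).1 hfree
    exact ⟨hdim, hef, hfv.2⟩
  · rintro ⟨hdim, hef, hfv⟩
    exact ⟨(mem_freeCells_block_diff_singleton_iff hef).2 ⟨hdim, hv.1, hfv⟩, hef⟩

end

/-- If `e` is the center of an `L`-block `L`, then exactly `2` free
`(n-1)`-cells of `L` are bounded by `e`. -/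
theorem bcount_in_Lblock (n : ℕ) (hn : 2 ≤ n) (e : Fin n → ℤ)
    (he : cdim e = n - 2) (v : Fin n → ℤ) (hv : v ∈ Block e) :
    bcount e (Block e \ {v}) (n - 1) = 2 := by
  rw [bcount_in_Lblock_general hv (by omega) (by omega), show n - cdim e = 2 by omega,
    show n - (n - 1) = 1 by omega, Nat.choose_one_right]

end DigitalGeometry
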